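/- Let (R,m) be a Noetherian local ring and I an ideal of R. Let x_1,…,x_s,y be a minimal generating set of I, where J=(x_1,…,x_s) is a reduction of I with reduction number r = r_J(I). Assume (a) x_1,…,x_s is a d-sequence, and (b) (x_1,…,x_i) ∩ I^{r+1} = (x_1,…,x_i)I^r for all i = 1,…,s−1. Then rt(I) = r_J(I) + 1 and (Q/Q⟨r⟩)_{r+1} contains the nonzero class of an equation Y^{r+1} − Σ_i X_i F_i induced by the containment y^{r+1} ∈ JI^r. If in addition (c) x_1,…,x_s is an R-regular sequence and (d) (x_1,…,x_i) ∩ I^r = (x_1,…,x_i)I^{r-1} for all i = 1,…,s−1, then there is a form Y^{r+1} − Σ_i X_i F_i ∈ Q_{r+1}, with F_i homogeneous of degree r, such that Q = (Y^{r+1} − Σ_i X_i F_i) + Q⟨r⟩. -/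

import Mathlib

open MvPolynomial

section Defs

variable {R : Type*} [CommRing R]

/-- The presentation of the Rees algebra of the ideal generated by `g`,
sending the `i`-th variable to `(g i) · t` inside `R[t]`. -/
noncomputable def reesPres {m : ℕ} (g : Fin m → R) :
    MvPolynomial (Fin m) R →ₐ[R] Polynomial R :=
  aeval fun i => Polynomial.C (g i) * Polynomial.X

/-- `Q`, the ideal of equations of the Rees algebra w.r.t. the generators `g`. -/
noncomputable def presKer {m : ℕ} (g : Fin m → R) : Ideal (MvPolynomial (Fin m) R) :=
  RingHom.ker (reesPres g)

/-- `Q⟨d⟩`, the subideal of `Q` generated by the homogeneous equations of degree at most `d`. -/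
noncomputable def presKerLe {m : ℕ} (g : Fin m → R) (d : ℕ) : Ideal (MvPolynomial (Fin m) R) :=
  Ideal.span {F | F ∈ presKer g ∧ ∃ k ≤ d, F.IsHomogeneous k}

/-- A `d`-sequence: it minimally generates `(x₁,…,xₛ)`, and
`((x₁,…,xᵢ) : xᵢ₊₁xₖ) = ((x₁,…,xᵢ) : xₖ)` for all `0 ≤ i ≤ s-1`, `k ≥ i+1`. -/
def IsDSequence {s : ℕ} (x : Fin s → R) : Prop :=
  (∀ i : Fin s, Ideal.span (Set.range x) ≠ Ideal.span (x '' {j | j ≠ i})) ∧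
  ∀ i k : Fin s, i ≤ k →
    (Ideal.span (x '' {j | j < i})).colon (Ideal.span {x i * x k})
      = (Ideal.span (x '' {j | j < i})).colon (Ideal.span {x k})

end Defs

open MvPolynomial

section Helpers

variable {R : Type*} [CommRing R]

lemma aux_rees_homog {m : ℕ} (g : Fin m → R) (F : MvPolynomial (Fin m) R) (n : ℕ)
    (hF : F.IsHomogeneous n) :
    reesPres g F = Polynomial.C (eval g F) * Polynomial.X ^ n := by
  unfold reesPres
  rw [aeval_def, eval₂_eq, eval_eq, map_sum, Finset.sum_mul]
  refine Finset.sum_congr rfl fun d hd => ?_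
  have hdeg : ∑ i ∈ d.support, d i = n := by
    have := hF (mem_support_iff.mp hd)
    rw [← this, Finsupp.weight_apply, Finsupp.sum]
    simp
  simp only [mul_pow, Finset.prod_mul_distrib, map_mul, map_prod, map_pow, Finset.prod_pow_eq_pow_sum,
    hdeg, Polynomial.algebraMap_eq]
  ring

lemma aux_mem_ker {m : ℕ} (g : Fin m → R) (F : MvPolynomial (Fin m) R) (n : ℕ)
    (hF : F.IsHomogeneous n) : F ∈ presKer g ↔ eval g F = 0 := by
  unfold presKer
  rw [RingHom.mem_ker]
  change reesPres g F = 0 ↔ _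
  rw [aux_rees_homog g F n hF]
  constructor
  · intro h
    have := congrArg (fun p => Polynomial.coeff p n) h
    simpa using this
  · intro h
    simp [h]

lemma aux_component {m : ℕ} (g : Fin m → R) (F : MvPolynomial (Fin m) R) (n : ℕ)
    (hF : F ∈ presKer g) : homogeneousComponent n F ∈ presKer g := by
  have hh := homogeneousComponent_isHomogeneous n F
  rw [aux_mem_ker g _ n hh]
  have h0 : reesPres g F = 0 := hF
  by_cases hn : n ∈ Finset.range (F.totalDegree + 1)
  · have h1 : reesPres g (∑ i ∈ Finset.range (F.totalDegree + 1), homogeneousComponent i F) = 0 := by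
      rw [sum_homogeneousComponent, h0]
    rw [map_sum] at h1
    have h2 := congrArg (fun p => Polynomial.coeff p n) h1
    simp only [aux_rees_homog g _ _ (homogeneousComponent_isHomogeneous _ F),
      Polynomial.finsetSum_coeff, Polynomial.coeff_C_mul, Polynomial.coeff_X_pow,
      Polynomial.coeff_zero, mul_ite, mul_one, mul_zero] at h2
    rw [Finset.sum_ite_eq, if_pos hn] at h2
    exact h2
  · rw [homogeneousComponent_eq_zero, map_zero]
    simp at hn
    omega

lemma aux_ker_le {m : ℕ} (g : Fin m → R) (L : Ideal (MvPolynomial (Fin m) R))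
    (h : ∀ n F, F ∈ presKer g → F.IsHomogeneous n → F ∈ L) : presKer g ≤ L := by
  intro F hF
  rw [← sum_homogeneousComponent F]
  exact Ideal.sum_mem _ fun n _ => h n _ (aux_component g F n hF)
    (homogeneousComponent_isHomogeneous n F)

lemma aux_kerLe_le {m : ℕ} (g : Fin m → R) (d : ℕ) : presKerLe g d ≤ presKer g :=
  Ideal.span_le.mpr fun _ hF => hF.1

lemma aux_kerLe_mono {m : ℕ} (g : Fin m → R) {d e : ℕ} (h : d ≤ e) :
    presKerLe g d ≤ presKerLe g e :=
  Ideal.span_mono fun _ ⟨h1, k, hk, h2⟩ => ⟨h1, k, hk.trans h, h2⟩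

lemma aux_decomp {s : ℕ} (n : ℕ) (F : MvPolynomial (Fin (s + 1)) R) (hF : F.IsHomogeneous (n + 1)) :
    ∃ (c : R) (G : Fin s → MvPolynomial (Fin (s + 1)) R), (∀ i, (G i).IsHomogeneous n) ∧
      F = C c * X (Fin.last s) ^ (n + 1) + ∑ i, X i.castSucc * G i := by
  classical
  suffices H : ∀ S : Finset (Fin (s + 1) →₀ ℕ), S ⊆ F.support →
      ∃ (c : R) (G : Fin s → MvPolynomial (Fin (s + 1)) R), (∀ i, (G i).IsHomogeneous n) ∧
      ∑ d ∈ S, monomial d (F.coeff d) =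
        C c * X (Fin.last s) ^ (n + 1) + ∑ i, X i.castSucc * G i by
    obtain ⟨c, G, h1, h2⟩ := H F.support subset_rfl
    refine ⟨c, G, h1, ?_⟩
    rw [← h2]; exact F.as_sum
  intro S
  induction S using Finset.induction_on with
  | empty => exact fun _ => ⟨0, 0, fun i => isHomogeneous_zero _ _ _, by simp⟩
  | insert d S hd ih =>
    intro hS
    obtain ⟨c, G, h1, h2⟩ := ih ((Finset.subset_insert _ _).trans hS)
    have hdF : d ∈ F.support := hS (Finset.mem_insert_self _ _)
    have hdeg : d.degree = n + 1 := by
      have := hF (mem_support_iff.mp hdF)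
      rwa [Finsupp.degree_eq_weight_one]
    rw [Finset.sum_insert hd, h2]
    by_cases hx : ∃ i : Fin s, d i.castSucc ≠ 0
    · obtain ⟨i, hi⟩ := hx
      have hle : Finsupp.single i.castSucc 1 ≤ d := by
        rw [Finsupp.single_le_iff]; omega
      obtain ⟨e, rfl⟩ := exists_add_of_le hle
      have he : e.degree = n := by
        rw [map_add, Finsupp.degree_single] at hdeg; omega
      refine ⟨c, fun j => G j + if j = i then monomial e (F.coeff (Finsupp.single i.castSucc 1 + e)) else 0,
        fun j => ?_, ?_⟩
      · refine (h1 j).add ?_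
        split_ifs
        · exact isHomogeneous_monomial _ he
        · exact isHomogeneous_zero _ _ _
      · simp only [mul_add, Finset.sum_add_distrib, mul_ite, mul_zero, Finset.sum_ite_eq',
          Finset.mem_univ, if_true]
        have hm : ∀ a : R, X i.castSucc * monomial e a =
            monomial (Finsupp.single i.castSucc 1 + e) a := fun a => by
          rw [X, monomial_mul, one_mul]
        rw [hm]
        ring
    · push Not at hx
      have hd' : d = Finsupp.single (Fin.last s) (n + 1) := by
        have h3 : d (Fin.last s) = n + 1 := by
          rw [Finsupp.degree_eq_sum, Fin.sum_univ_castSucc] at hdeg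
          simpa [hx] using hdeg
        ext j
        refine Fin.lastCases ?_ (fun i => ?_) j
        · simp [h3]
        · rw [hx, Finsupp.single_apply, if_neg]
          exact (Fin.castSucc_lt_last i).ne'
      refine ⟨c + F.coeff d, G, h1, ?_⟩
      have : monomial d (F.coeff d) = C (F.coeff d) * X (Fin.last s) ^ (n + 1) := by
        rw [X_pow_eq_monomial, C_mul_monomial, mul_one, ← hd']
      rw [this, map_add]
      ring

/-- The ideal generated by the first `k` elements. -/
def auxJ {s : ℕ} (x : Fin s → R) (k : ℕ) : Ideal R := Ideal.span (x '' {j | (j : ℕ) < k})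

lemma auxJ_mem {s : ℕ} (x : Fin s → R) {k : ℕ} (j : Fin s) (h : (j : ℕ) < k) : x j ∈ auxJ x k :=
  Ideal.subset_span ⟨j, h, rfl⟩

lemma auxJ_mono {s : ℕ} (x : Fin s → R) {k l : ℕ} (h : k ≤ l) : auxJ x k ≤ auxJ x l :=
  Ideal.span_mono (Set.image_mono fun _ hj => lt_of_lt_of_le hj h)

lemma auxJ_top {s : ℕ} (x : Fin s → R) : auxJ x s = Ideal.span (Set.range x) := by
  unfold auxJ
  congr 1
  ext z; simp

lemma auxJ_zero {s : ℕ} (x : Fin s → R) : auxJ x 0 = ⊥ := by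
  simp [auxJ]

lemma auxJ_mul {s : ℕ} (x : Fin s → R) (k : ℕ) (K : Ideal R) (z : R) (hz : z ∈ auxJ x k * K) :
    ∃ h : Fin s → R, (∀ j, h j ∈ K) ∧ (∀ j : Fin s, k ≤ (j : ℕ) → h j = 0) ∧ z = ∑ j, x j * h j := by
  classical
  induction hz using Submodule.mul_induction_on' with
  | mem_mul_mem m hm n hn =>
    unfold auxJ at hm
    induction hm using Submodule.span_induction with
    | mem a ha =>
      obtain ⟨j, hj, rfl⟩ := ha
      refine ⟨fun i => if i = j then n else 0, fun i => ?_, fun i hi => ?_, ?_⟩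
      · dsimp only; split_ifs
        · exact hn
        · exact K.zero_mem
      · dsimp only; rw [if_neg]; rintro rfl
        exact absurd hj (by simpa using hi)
      · simp
    | zero => exact ⟨0, fun _ => K.zero_mem, fun _ _ => rfl, by simp⟩
    | add a b _ _ iha ihb =>
      obtain ⟨h1, p1, q1, r1⟩ := iha
      obtain ⟨h2, p2, q2, r2⟩ := ihb
      refine ⟨h1 + h2, fun j => K.add_mem (p1 j) (p2 j), fun j hj => by simp [q1 j hj, q2 j hj], ?_⟩
      rw [add_mul, r1, r2, ← Finset.sum_add_distrib]
      exact Finset.sum_congr rfl fun j _ => by simp [mul_add]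
    | smul c a _ iha =>
      obtain ⟨h1, p1, q1, r1⟩ := iha
      refine ⟨fun j => c * h1 j, fun j => K.mul_mem_left _ (p1 j), fun j hj => by simp [q1 j hj], ?_⟩
      rw [smul_eq_mul, mul_assoc, r1, Finset.mul_sum]
      exact Finset.sum_congr rfl fun j _ => by ring
  | add a _ b _ iha ihb =>
    obtain ⟨h1, p1, q1, r1⟩ := iha
    obtain ⟨h2, p2, q2, r2⟩ := ihb
    refine ⟨h1 + h2, fun j => K.add_mem (p1 j) (p2 j), fun j hj => by simp [q1 j hj, q2 j hj], ?_⟩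
    rw [r1, r2, ← Finset.sum_add_distrib]
    exact Finset.sum_congr rfl fun j _ => by simp [mul_add]

lemma auxJ_succ {s : ℕ} (x : Fin s → R) (k : Fin s) (K : Ideal R) :
    auxJ x (k + 1) * K ≤ auxJ x k * K ⊔ Ideal.span {x k} * K := by
  rw [← Ideal.sup_mul]
  refine Ideal.mul_mono_left (Ideal.span_le.mpr ?_)
  rintro _ ⟨j, hj, rfl⟩
  rcases Nat.lt_succ_iff_lt_or_eq.mp hj with h | h
  · exact Ideal.mem_sup_left (auxJ_mem x j h)
  · obtain rfl : j = k := Fin.ext h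
    exact Ideal.mem_sup_right (Ideal.mem_span_singleton_self _)

lemma auxJ_succ_mem {s : ℕ} (x : Fin s → R) (k : Fin s) (K : Ideal R) (z : R)
    (hz : z ∈ auxJ x (k + 1) * K) : ∃ w ∈ auxJ x k * K, ∃ u ∈ K, z = w + x k * u := by
  obtain ⟨w, hw, v, hv, rfl⟩ := Submodule.mem_sup.mp (auxJ_succ x k K hz)
  obtain ⟨u, hu, rfl⟩ := Ideal.mem_span_singleton_mul.mp hv
  exact ⟨w, hw, u, hu, rfl⟩

lemma aux_dseq {s : ℕ} (x : Fin s → R) (ha : IsDSequence x) (i : Fin s) (u : R)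
    (hu : u ∈ Ideal.span (Set.range x)) (hx : x i * u ∈ auxJ x i) : u ∈ auxJ x i := by
  have hd : ∀ i k : Fin s, i ≤ k → ∀ a, a * (x i * x k) ∈ auxJ x i → a * x k ∈ auxJ x i := by
    intro i k hik a h
    have h1 := ha.2 i k hik
    have h2 : a ∈ (Ideal.span (x '' {j | j < i})).colon (Ideal.span {x i * x k}) := by
      rw [Ideal.colon_span, Submodule.mem_colon_singleton]; exact h
    rw [h1, Ideal.colon_span, Submodule.mem_colon_singleton] at h2
    exact h2
  have hk : ∀ k : Fin s, i ≤ k → x k * u ∈ auxJ x i := by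
    intro k hik
    rw [mul_comm]
    apply hd i k hik
    have := Ideal.mul_mem_right (x k) _ hx
    convert this using 1; ring
  have key : ∀ t : ℕ, (i : ℕ) + t ≤ s → u ∈ auxJ x (i + t) → u ∈ auxJ x i := by
    intro t
    induction t with
    | zero => exact fun _ h => h
    | succ t ih =>
      intro ht hu'
      refine ih (by omega) ?_
      have hlt : (i : ℕ) + t < s := by omega
      let k : Fin s := ⟨i + t, hlt⟩
      have hik : i ≤ k := by simp [Fin.le_def, k]
      have hu2 : u ∈ auxJ x (k + 1) * ⊤ := by rw [Ideal.mul_top]; exact hu'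
      obtain ⟨w, hw, a, -, h⟩ := auxJ_succ_mem x k ⊤ u hu2
      rw [Ideal.mul_top] at hw
      change u ∈ auxJ x k
      have h1 : x k * u ∈ auxJ x k := auxJ_mono x (Fin.le_def.mp hik) (hk k hik)
      have h2 : a * (x k * x k) ∈ auxJ x k := by
        have : a * (x k * x k) = x k * u - x k * w := by rw [h]; ring
        rw [this]
        exact Ideal.sub_mem _ h1 (Ideal.mul_mem_left _ _ hw)
      have h3 := hd k k le_rfl a h2
      rw [h, mul_comm (x k)]
      exact Ideal.add_mem _ hw h3
  refine key (s - i) (by omega) ?_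
  rw [show (i : ℕ) + (s - i) = s by omega, auxJ_top]
  exact hu

lemma aux_reg {s : ℕ} (x : Fin s → R) (h : RingTheory.Sequence.IsRegular R (List.ofFn x))
    (i : Fin s) (u : R) (hx : x i * u ∈ auxJ x i) : u ∈ auxJ x i := by
  have h1 := h.toIsWeaklyRegular.regular_mod_prev i (by simp)
  have h2 : (Ideal.ofList ((List.ofFn x).take i) • ⊤ : Submodule R R) = auxJ x i := by
    rw [smul_eq_mul, Ideal.mul_top]
    unfold auxJ Ideal.ofList
    congr 1
    ext z
    simp only [Set.mem_ofPred_eq, Set.mem_image, List.mem_take_iff_getElem, List.getElem_ofFn,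
      List.length_ofFn]
    constructor
    · rintro ⟨j, hj, rfl⟩
      exact ⟨⟨j, by omega⟩, by simp; omega, rfl⟩
    · rintro ⟨j, hj, rfl⟩
      exact ⟨j, by omega, rfl⟩
  rw [h2] at h1
  have h3 : (Submodule.Quotient.mk u : R ⧸ auxJ x i) = 0 := by
    apply h1.right_eq_zero_of_smul
    rw [← Submodule.Quotient.mk_smul, Submodule.Quotient.mk_eq_zero]
    simpa using hx
  exact (Submodule.Quotient.mk_eq_zero _).mp h3

lemma aux_VV {s r : ℕ} (x : Fin s → R) (I : Ideal R) (ha : IsDSequence x)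
    (hI : ∀ n, r ≤ n → I ^ (n + 1) = Ideal.span (Set.range x) * I ^ n)
    (hJI : Ideal.span (Set.range x) ≤ I)
    (hb : ∀ i, i ≤ s → auxJ x i ⊓ I ^ (r + 1) ≤ auxJ x i * I ^ r) :
    ∀ n, r ≤ n → ∀ i, i ≤ s → auxJ x i ⊓ I ^ (n + 1) ≤ auxJ x i * I ^ n := by
  intro n hn
  induction n, hn using Nat.le_induction with
  | base => exact hb
  | succ n hn ih =>
    suffices H : ∀ t i, i + t = s → auxJ x i ⊓ I ^ (n + 1 + 1) ≤ auxJ x i * I ^ (n + 1) from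
      fun i hi => H (s - i) i (by omega)
    intro t
    induction t with
    | zero =>
      intro i hi
      obtain rfl : i = s := by omega
      rw [hI (n + 1) (by omega), auxJ_top]
      exact inf_le_right
    | succ t iht =>
      intro i hi z ⟨hz1, hz2⟩
      have hlt : i < s := by omega
      have hz3 := iht (i + 1) (by omega) ⟨auxJ_mono x (Nat.le_succ i) hz1, hz2⟩
      obtain ⟨w, hw, u, hu, rfl⟩ := auxJ_succ_mem x ⟨i, hlt⟩ _ z hz3
      have hxu : x ⟨i, hlt⟩ * u ∈ auxJ x i := by
        have hw' : w ∈ auxJ x i := (Ideal.mul_le_left : auxJ x i * I ^ (n + 1) ≤ auxJ x i) hw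
        exact ((auxJ x i).add_mem_iff_right hw').mp hz1
      have huJ : u ∈ Ideal.span (Set.range x) := by
        have h := hu
        rw [hI n hn] at h
        exact (Ideal.mul_le_left :
          Ideal.span (Set.range x) * I ^ n ≤ Ideal.span (Set.range x)) h
      have hu2 := ih i hlt.le ⟨aux_dseq x ha ⟨i, hlt⟩ u huJ hxu, hu⟩
      refine Ideal.add_mem _ hw ?_
      have : u * x ⟨i, hlt⟩ ∈ auxJ x i * I ^ n * I :=
        Ideal.mul_mem_mul hu2 (hJI (Ideal.subset_span ⟨_, rfl⟩))
      rw [mul_assoc, ← pow_succ] at this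
      rwa [mul_comm (x ⟨i, hlt⟩)]

lemma aux_step {s : ℕ} (g : Fin (s + 1) → R) (n : ℕ) (L : Ideal (MvPolynomial (Fin (s + 1)) R))
    (hcond : ∀ (i : Fin s) (u : R), u ∈ Ideal.span (Set.range g) ^ (n + 1) →
      g i.castSucc * u ∈ auxJ (fun j => g j.castSucc) i →
      u ∈ auxJ (fun j => g j.castSucc) i * Ideal.span (Set.range g) ^ n)
    (hL : ∀ F, F ∈ presKer g → F.IsHomogeneous (n + 1) → F ∈ L) (k : ℕ) (hk : k ≤ s)
    (G : Fin s → MvPolynomial (Fin (s + 1)) R) (hG : ∀ i, (G i).IsHomogeneous (n + 1))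
    (hG0 : ∀ i : Fin s, k ≤ (i : ℕ) → G i = 0)
    (hker : ∑ i, X i.castSucc * G i ∈ presKer g) : ∑ i, X i.castSucc * G i ∈ L := by
  classical
  induction k generalizing G with
  | zero =>
    have : ∑ i, X i.castSucc * G i = 0 := Finset.sum_eq_zero fun i _ => by simp [hG0 i (Nat.zero_le _)]
    rw [this]; exact L.zero_mem
  | succ k ih =>
    have hks : k < s := hk
    let i : Fin s := ⟨k, hks⟩
    have hsum : ∀ G : Fin s → MvPolynomial (Fin (s + 1)) R, ∀ m, (∀ i, (G i).IsHomogeneous m) →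
        (∑ i : Fin s, X i.castSucc * G i).IsHomogeneous (1 + m) := fun G m hG =>
      IsHomogeneous.sum _ _ _ fun i _ => (isHomogeneous_X R _).mul (hG i)
    have he : ∑ j : Fin s, g j.castSucc * eval g (G j) = 0 := by
      have := (aux_mem_ker g _ _ (hsum G _ hG)).mp hker
      simpa using this
    have hgi : eval g (G i) ∈ Ideal.span (Set.range g) ^ (n + 1) :=
      (Ideal.mem_span_pow_iff_exists_isHomogeneous g _).mpr ⟨G i, hG i, rfl⟩
    have hxi : g i.castSucc * eval g (G i) ∈ auxJ (fun j => g j.castSucc) i := by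
      rw [← Finset.add_sum_erase _ _ (Finset.mem_univ i)] at he
      rw [eq_neg_of_add_eq_zero_left he]
      refine Ideal.neg_mem_iff _ |>.mpr (Ideal.sum_mem _ fun j hj => ?_)
      rcases lt_or_ge (j : ℕ) k with h | h
      · exact Ideal.mul_mem_right _ _ (auxJ_mem (fun j : Fin s => g j.castSucc) j h)
      · have hne : (j : ℕ) ≠ k := fun h' => (Finset.mem_erase.mp hj).1 (Fin.ext h')
        rw [hG0 j (by omega)]; simp
    obtain ⟨h, hh1, hh2, hh3⟩ := auxJ_mul _ _ _ _ (hcond i _ hgi hxi)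
    have hex : ∀ j : Fin s, ∃ H : MvPolynomial (Fin (s + 1)) R, H.IsHomogeneous n ∧
        eval g H = h j ∧ (k ≤ (j : ℕ) → H = 0) := by
      intro j
      rcases lt_or_ge (j : ℕ) k with hj | hj
      · obtain ⟨H, h1, h2⟩ := (Ideal.mem_span_pow_iff_exists_isHomogeneous g _).mp (hh1 j)
        exact ⟨H, h1, h2, fun h => absurd h (by omega)⟩
      · exact ⟨0, isHomogeneous_zero _ _ _, by rw [hh2 j hj, map_zero], fun _ => rfl⟩
    choose H hH1 hH2 hH3 using hex
    have hDh : (G i - ∑ j, X j.castSucc * H j).IsHomogeneous (n + 1) :=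
      (hG i).sub (by rw [add_comm n 1]; exact hsum H n hH1)
    have hD : G i - ∑ j, X j.castSucc * H j ∈ L := by
      refine hL _ ?_ hDh
      rw [aux_mem_ker g _ _ hDh]
      simp [hH2, hh3]
    have hHi : H i = 0 := hH3 i le_rfl
    let G' : Fin s → MvPolynomial (Fin (s + 1)) R := fun j =>
      G j + X i.castSucc * H j - if j = i then G i else 0
    have hG'h : ∀ j, (G' j).IsHomogeneous (n + 1) := by
      intro j
      refine ((hG j).add ?_).sub ?_
      · rw [add_comm n 1]; exact (isHomogeneous_X R _).mul (hH1 j)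
      · split_ifs
        · exact hG i
        · exact isHomogeneous_zero _ _ _
    have hG'0 : ∀ j : Fin s, k ≤ (j : ℕ) → G' j = 0 := by
      intro j hj
      rcases eq_or_ne j i with rfl | hne
      · simp [G', hHi]
      · have hne' : (j : ℕ) ≠ k := fun h' => hne (Fin.ext h')
        simp [G', hne, hH3 j hj, hG0 j (by omega)]
    have hG's : ∑ j, X j.castSucc * G j =
        X i.castSucc * (G i - ∑ j, X j.castSucc * H j) + ∑ j, X j.castSucc * G' j := by
      have : ∑ j, X j.castSucc * G' j = ∑ j, X j.castSucc * G j +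
          X i.castSucc * ∑ j, X j.castSucc * H j - X i.castSucc * G i := by
        simp only [G', mul_sub, mul_add, Finset.sum_sub_distrib, Finset.sum_add_distrib, mul_ite,
          mul_zero, Finset.sum_ite_eq', Finset.mem_univ, if_true, Finset.mul_sum]
        congr 2
        exact Finset.sum_congr rfl fun j _ => by ring
      rw [this]; ring
    rw [hG's]
    refine L.add_mem (L.mul_mem_left _ hD) (ih hks.le G' hG'h hG'0 ?_)
    have hDk : G i - ∑ j, X j.castSucc * H j ∈ presKer g := by
      rw [aux_mem_ker g _ _ hDh]
      simp [hH2, hh3]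
    have := Ideal.sub_mem _ hker (Ideal.mul_mem_left _ (X i.castSucc) hDk)
    rw [hG's] at this
    simpa using this

lemma aux_step' {s : ℕ} (g : Fin (s + 1) → R) (n r : ℕ) (hr : r ≤ n + 1)
    (L : Ideal (MvPolynomial (Fin (s + 1)) R))
    (hcond : ∀ (i : Fin s) (u : R), u ∈ Ideal.span (Set.range g) ^ (n + 1) →
      g i.castSucc * u ∈ auxJ (fun j => g j.castSucc) i →
      u ∈ auxJ (fun j => g j.castSucc) i * Ideal.span (Set.range g) ^ n)
    (hL : ∀ F, F ∈ presKer g → F.IsHomogeneous (n + 1) → F ∈ L)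
    (P : Fin s → MvPolynomial (Fin (s + 1)) R) (hP : ∀ i, (P i).IsHomogeneous r)
    (hPk : (X (Fin.last s) ^ (r + 1) - ∑ i, X i.castSucc * P i) ∈ presKer g)
    (hPL : (X (Fin.last s) ^ (r + 1) - ∑ i, X i.castSucc * P i) ∈ L)
    (F : MvPolynomial (Fin (s + 1)) R) (hF : F ∈ presKer g) (hFh : F.IsHomogeneous (n + 2)) :
    F ∈ L := by
  obtain ⟨c, G, hG, rfl⟩ := aux_decomp (n + 1) F hFh
  obtain ⟨t, ht⟩ := Nat.exists_eq_add_of_le hr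
  have hG' : ∀ i, (G i + C c * X (Fin.last s) ^ t * P i).IsHomogeneous (n + 1) := by
    intro i
    refine (hG i).add ?_
    have h1 : (X (Fin.last s) ^ t : MvPolynomial (Fin (s + 1)) R).IsHomogeneous t :=
      isHomogeneous_X_pow _ _
    have := ((isHomogeneous_C (Fin (s + 1)) c).mul h1).mul (hP i)
    rwa [show 0 + t + r = n + 1 by omega] at this
  have heq : C c * X (Fin.last s) ^ (n + 1 + 1) + ∑ i, X i.castSucc * G i =
      C c * X (Fin.last s) ^ t * (X (Fin.last s) ^ (r + 1) - ∑ i, X i.castSucc * P i) +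
      ∑ i, X i.castSucc * (G i + C c * X (Fin.last s) ^ t * P i) := by
    have : ∑ i, X i.castSucc * (G i + C c * X (Fin.last s) ^ t * P i) =
        ∑ i, X i.castSucc * G i + C c * X (Fin.last s) ^ t * ∑ i, X i.castSucc * P i := by
      simp only [mul_add, Finset.sum_add_distrib, Finset.mul_sum]
      congr 1
      exact Finset.sum_congr rfl fun j _ => by ring
    rw [this, ht]; ring
  rw [heq] at hF ⊢
  refine L.add_mem (L.mul_mem_left _ hPL) ?_
  refine aux_step g n L hcond hL s le_rfl _ hG' (fun i hi => absurd i.2 (by omega)) ?_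
  have := Ideal.sub_mem _ hF (Ideal.mul_mem_left _ (C c * X (Fin.last s) ^ t) hPk)
  simpa using this

lemma aux_red {s : ℕ} (g : Fin (s + 1) → R) (n : ℕ)
    (h : g (Fin.last s) ^ (n + 1) ∈
      Ideal.span (Set.range fun j : Fin s => g j.castSucc) * Ideal.span (Set.range g) ^ n) :
    Ideal.span (Set.range g) ^ (n + 1) =
      Ideal.span (Set.range fun j : Fin s => g j.castSucc) * Ideal.span (Set.range g) ^ n := by
  apply le_antisymm
  · intro a haa
    obtain ⟨F, hF, rfl⟩ := (Ideal.mem_span_pow_iff_exists_isHomogeneous g _).mp haa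
    obtain ⟨c, G, hG, rfl⟩ := aux_decomp n F hF
    simp only [map_add, map_mul, map_pow, eval_C, eval_X, map_sum]
    refine Ideal.add_mem _ (Ideal.mul_mem_left _ _ h) (Ideal.sum_mem _ fun j _ => ?_)
    exact Ideal.mul_mem_mul (Ideal.subset_span ⟨j, rfl⟩)
      ((Ideal.mem_span_pow_iff_exists_isHomogeneous g _).mpr ⟨G j, hG j, rfl⟩)
  · rw [pow_succ']
    refine Ideal.mul_mono_left (Ideal.span_mono ?_)
    rintro _ ⟨j, rfl⟩
    exact ⟨_, rfl⟩

lemma aux_notMem [IsLocalRing R] {s : ℕ} (g : Fin (s + 1) → R) (r : ℕ)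
    (hmin : ∀ n < r, Ideal.span (Set.range g) ^ (n + 1) ≠
      Ideal.span (Set.range fun j : Fin s => g j.castSucc) * Ideal.span (Set.range g) ^ n)
    (P : Fin s → MvPolynomial (Fin (s + 1)) R) :
    (X (Fin.last s) ^ (r + 1) - ∑ i, X i.castSucc * P i) ∉ presKerLe g r := by
  classical
  let ψ : MvPolynomial (Fin (s + 1)) R →+* Polynomial (IsLocalRing.ResidueField R) :=
    eval₂Hom (Polynomial.C.comp (IsLocalRing.residue R))
      (Fin.snoc (fun _ : Fin s => (0 : Polynomial (IsLocalRing.ResidueField R))) Polynomial.X)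
  have hψx : ∀ i : Fin s, ψ (X i.castSucc) = 0 := fun i => by simp [ψ]
  have hψy : ψ (X (Fin.last s)) = Polynomial.X := by simp [ψ]
  have hψc : ∀ c, ψ (C c) = Polynomial.C (IsLocalRing.residue R c) := fun c => by simp [ψ]
  have hle : presKerLe g r ≤ RingHom.ker ψ := by
    refine Ideal.span_le.mpr ?_
    rintro F ⟨hF, k, hk, hFh⟩
    change ψ F = 0
    rw [aux_mem_ker g F k hFh] at hF
    cases k with
    | zero =>
      obtain ⟨c, rfl⟩ : ∃ c, F = C c := ⟨_, totalDegree_eq_zero_iff_eq_C.mp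
        (Nat.le_zero.mp hFh.totalDegree_le)⟩
      rw [eval_C] at hF
      simp [hF]
    | succ n =>
      obtain ⟨c, G, hG, rfl⟩ := aux_decomp n F hFh
      simp only [map_add, map_mul, map_pow, map_sum, hψx, hψy, hψc, zero_mul, Finset.sum_const_zero,
        add_zero]
      simp only [map_add, map_mul, map_pow, eval_C, eval_X, map_sum] at hF
      have hc : IsLocalRing.residue R c = 0 := by
        by_contra hc
        have hu : IsUnit c := by
          by_contra hu
          exact hc ((IsLocalRing.residue_eq_zero_iff c).mpr ((IsLocalRing.mem_maximalIdeal c).mpr hu))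
        refine hmin n hk (aux_red g n ?_)
        refine (Ideal.unit_mul_mem_iff_mem _ hu).mp ?_
        rw [eq_neg_of_add_eq_zero_left hF]
        refine (Ideal.neg_mem_iff _).mpr (Ideal.sum_mem _ fun j _ => ?_)
        exact Ideal.mul_mem_mul (Ideal.subset_span ⟨j, rfl⟩)
          ((Ideal.mem_span_pow_iff_exists_isHomogeneous g _).mpr ⟨G j, hG j, rfl⟩)
      simp [hc]
  intro h
  have h1 : ψ _ = 0 := hle h
  simp only [map_sub, map_mul, map_pow, map_sum, hψx, hψy, zero_mul, Finset.sum_const_zero,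
    sub_zero] at h1
  exact pow_ne_zero _ Polynomial.X_ne_zero h1

end Helpers


/-- Weaker version of Theorem A: under the `d`-sequence and Valabrega–Valla hypotheses,
`rt(I) = r_J(I) + 1` and `(Q/Q⟨r⟩)_{r+1}` contains the nonzero class of an equation
`Y^{r+1} − ∑ Xᵢ Fᵢ`; with the extra hypotheses (c), (d) one gets
`Q = (Y^{r+1} − ∑ Xᵢ Fᵢ) + Q⟨r⟩`. -/
theorem statement3 {R : Type*} [CommRing R] [IsNoetherianRing R] [IsLocalRing R]
    (I : Ideal R) {s : ℕ} (x : Fin s → R) (y : R) (r : ℕ)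
    (J : Ideal R) (hJ : J = Ideal.span (Set.range x))
    (hgen : I = Ideal.span (Set.range (Fin.snoc x y)))
    (hmin : ∀ i : Fin (s + 1), I ≠ Ideal.span (Fin.snoc x y '' {j | j ≠ i}))
    (hred : IsLeast {k : ℕ | I ^ (k + 1) = J * I ^ k} r)
    (ha : IsDSequence x)
    (hb : ∀ i : ℕ, 1 ≤ i → i ≤ s - 1 →
      Ideal.span (x '' {j | (j : ℕ) < i}) ⊓ I ^ (r + 1)
        = Ideal.span (x '' {j | (j : ℕ) < i}) * I ^ r) :
    (IsLeast {N : ℕ | 1 ≤ N ∧ presKer (Fin.snoc x y) = presKerLe (Fin.snoc x y) N} (r + 1) ∧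
      ∃ F : Fin s → MvPolynomial (Fin (s + 1)) R, (∀ i, (F i).IsHomogeneous r) ∧
        (X (Fin.last s) ^ (r + 1) - ∑ i, X i.castSucc * F i) ∈ presKer (Fin.snoc x y) ∧
        (X (Fin.last s) ^ (r + 1) - ∑ i, X i.castSucc * F i) ∉ presKerLe (Fin.snoc x y) r) ∧
    (RingTheory.Sequence.IsRegular R (List.ofFn x) →
      (∀ i : ℕ, 1 ≤ i → i ≤ s - 1 →
        Ideal.span (x '' {j | (j : ℕ) < i}) ⊓ I ^ r
          = Ideal.span (x '' {j | (j : ℕ) < i}) * I ^ (r - 1)) →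
      ∃ F : Fin s → MvPolynomial (Fin (s + 1)) R, (∀ i, (F i).IsHomogeneous r) ∧
        (X (Fin.last s) ^ (r + 1) - ∑ i, X i.castSucc * F i) ∈ presKer (Fin.snoc x y) ∧
        presKer (Fin.snoc x y)
          = Ideal.span {X (Fin.last s) ^ (r + 1) - ∑ i, X i.castSucc * F i}
              ⊔ presKerLe (Fin.snoc x y) r) := by
  classical
  subst hJ
  obtain ⟨g, hg⟩ : ∃ g : Fin (s + 1) → R, g = Fin.snoc x y := ⟨_, rfl⟩
  have hgx : ∀ j : Fin s, g j.castSucc = x j := fun j => by rw [hg]; simp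
  have hgx' : (fun j : Fin s => g j.castSucc) = x := funext hgx
  have hgy : g (Fin.last s) = y := by rw [hg]; simp
  have hgen' : I = Ideal.span (Set.range g) := by rw [hg]; exact hgen
  have hmin' : I ≠ Ideal.span (Set.range x) := by
    intro h
    refine hmin (Fin.last s) (h.trans ?_)
    congr 1
    ext z
    constructor
    · rintro ⟨j, rfl⟩
      exact ⟨j.castSucc, (Fin.castSucc_lt_last j).ne, by simp⟩
    · rintro ⟨j, hj, rfl⟩
      obtain ⟨j, rfl⟩ := Fin.exists_castSucc_eq.mpr hj
      exact ⟨j, by simp⟩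
  rw [← hg]
  clear hgen hmin
  have hr1 : 1 ≤ r := by
    rcases Nat.eq_zero_or_pos r with h | h
    · exfalso
      have := hred.1
      rw [h] at this
      simp only [Set.mem_ofPred_eq, zero_add, pow_one, pow_zero, mul_one] at this
      exact hmin' (by simpa using this)
    · exact h
  have hJI : Ideal.span (Set.range x) ≤ I := by
    rw [hgen']
    refine Ideal.span_mono ?_
    rintro _ ⟨j, rfl⟩
    exact ⟨j.castSucc, hgx j⟩
  have hIr : I ^ (r + 1) = Ideal.span (Set.range x) * I ^ r := hred.1
  have hI : ∀ n, r ≤ n → I ^ (n + 1) = Ideal.span (Set.range x) * I ^ n := by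
    intro n hn
    induction n, hn using Nat.le_induction with
    | base => exact hIr
    | succ n hn ih => rw [pow_succ, ih, mul_assoc, ← pow_succ, ih]
  have hb' : ∀ i, i ≤ s → auxJ x i ⊓ I ^ (r + 1) ≤ auxJ x i * I ^ r := by
    intro i hi
    rcases Nat.eq_zero_or_pos i with rfl | h0
    · rw [auxJ_zero]; simp
    · rcases Nat.lt_or_ge i s with h | h
      · exact (hb i h0 (by omega)).le
      · obtain rfl : i = s := le_antisymm hi h
        rw [auxJ_top, hIr]
        exact inf_le_right
  have hVV := aux_VV x I ha hI hJI hb'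
  have hcond : ∀ n, r ≤ n → ∀ (i : Fin s) (u : R), u ∈ Ideal.span (Set.range g) ^ (n + 1) →
      g i.castSucc * u ∈ auxJ (fun j => g j.castSucc) i →
      u ∈ auxJ (fun j => g j.castSucc) i * Ideal.span (Set.range g) ^ n := by
    intro n hn i u hu hxu
    rw [hgx', hgx] at hxu
    rw [← hgen'] at hu ⊢
    rw [hgx']
    refine hVV n hn i i.2.le ⟨aux_dseq x ha i u ?_ hxu, hu⟩
    have h := hu
    rw [hI n hn] at h
    exact (Ideal.mul_le_left :
      Ideal.span (Set.range x) * I ^ n ≤ Ideal.span (Set.range x)) h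
  obtain ⟨P, hP, hPk⟩ : ∃ F : Fin s → MvPolynomial (Fin (s + 1)) R, (∀ i, (F i).IsHomogeneous r) ∧
      (X (Fin.last s) ^ (r + 1) - ∑ i, X i.castSucc * F i) ∈ presKer g := by
    have hy : y ^ (r + 1) ∈ auxJ x s * I ^ r := by
      rw [auxJ_top, ← hIr]
      refine Ideal.pow_mem_pow ?_ _
      rw [hgen']
      exact Ideal.subset_span ⟨_, hgy⟩
    obtain ⟨h, h1, -, h3⟩ := auxJ_mul _ _ _ _ hy
    rw [hgen'] at h1
    have hex := fun j => (Ideal.mem_span_pow_iff_exists_isHomogeneous g _).mp (h1 j)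
    choose F hF1 hF2 using hex
    refine ⟨F, hF1, ?_⟩
    rw [aux_mem_ker g _ (r + 1)]
    · simp [hF2, hgx, hgy, h3]
    · refine (isHomogeneous_X_pow _ _).sub (IsHomogeneous.sum _ _ _ fun i _ => ?_)
      rw [add_comm r 1]
      exact (isHomogeneous_X R _).mul (hF1 i)
  have hPh : (X (Fin.last s) ^ (r + 1) - ∑ i : Fin s, X i.castSucc * P i).IsHomogeneous (r + 1) := by
    refine (isHomogeneous_X_pow _ _).sub (IsHomogeneous.sum _ _ _ fun i _ => ?_)
    rw [add_comm r 1]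
    exact (isHomogeneous_X R _).mul (hP i)
  have hPn : (X (Fin.last s) ^ (r + 1) - ∑ i, X i.castSucc * P i) ∉ presKerLe g r := by
    refine aux_notMem g r ?_ P
    intro n hn h
    rw [← hgen', hgx'] at h
    exact absurd (hred.2 h) (by omega)
  have hmain : ∀ L : Ideal (MvPolynomial (Fin (s + 1)) R),
      (X (Fin.last s) ^ (r + 1) - ∑ i, X i.castSucc * P i) ∈ L →
      (∀ n ≤ r + 1, ∀ F, F ∈ presKer g → F.IsHomogeneous n → F ∈ L) → presKer g ≤ L := by
    intro L hPL hL
    have key : ∀ n, r + 1 ≤ n → ∀ F, F ∈ presKer g → F.IsHomogeneous n → F ∈ L := by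
      intro n hn
      induction n, hn using Nat.le_induction with
      | base => exact hL _ le_rfl
      | succ n hn ih =>
        obtain ⟨m, rfl⟩ : ∃ m, n = m + 1 := ⟨n - 1, by omega⟩
        exact fun F => aux_step' g m r (by omega) L (hcond m (by omega)) ih P hP hPk hPL F
    refine aux_ker_le g L fun n F hF hFh => ?_
    rcases le_total n (r + 1) with h | h
    · exact hL n h F hF hFh
    · exact key n h F hF hFh
  refine ⟨⟨⟨⟨by omega, le_antisymm ?_ (aux_kerLe_le g _)⟩, ?_⟩, P, hP, hPk, hPn⟩, ?_⟩
  · exact hmain _ (Ideal.subset_span ⟨hPk, r + 1, le_rfl, hPh⟩)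
      fun n hn F hF hFh => Ideal.subset_span ⟨hF, n, hn, hFh⟩
  · rintro N ⟨-, hN⟩
    by_contra hlt
    apply hPn
    apply aux_kerLe_mono g (show N ≤ r by omega)
    rw [← hN]
    exact hPk
  · intro hreg hd
    refine ⟨P, hP, hPk, le_antisymm ?_ (sup_le ?_ (aux_kerLe_le g r))⟩
    · have hle : ∀ n ≤ r, ∀ F, F ∈ presKer g → F.IsHomogeneous n →
          F ∈ Ideal.span {X (Fin.last s) ^ (r + 1) - ∑ i, X i.castSucc * P i} ⊔ presKerLe g r :=
        fun n hn F hF hFh => Ideal.mem_sup_right (Ideal.subset_span ⟨hF, n, hn, hFh⟩)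
      have hPL : (X (Fin.last s) ^ (r + 1) - ∑ i, X i.castSucc * P i) ∈
          Ideal.span {X (Fin.last s) ^ (r + 1) - ∑ i, X i.castSucc * P i} ⊔ presKerLe g r :=
        Ideal.mem_sup_left (Ideal.mem_span_singleton_self _)
      refine hmain _ hPL fun n hn F hF hFh => ?_
      rcases Nat.lt_or_ge r n with h | h
      · obtain rfl : n = r + 1 := by omega
        obtain ⟨m, rfl⟩ : ∃ m, r = m + 1 := ⟨r - 1, by omega⟩
        refine aux_step' g m (m + 1) le_rfl _ ?_ (hle _ le_rfl) P hP hPk hPL F hF hFh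
        intro i u hu hxu
        rw [hgx', hgx] at hxu
        rw [← hgen'] at hu ⊢
        rw [hgx']
        have huJ := aux_reg x hreg i u hxu
        rcases Nat.eq_zero_or_pos (i : ℕ) with h0 | h0
        · rw [h0, auxJ_zero] at huJ
          rw [(Submodule.mem_bot R).mp huJ]
          exact Ideal.zero_mem _
        · exact (hd i h0 (by omega)).le ⟨huJ, hu⟩
      · exact hle n h F hF hFh
    · rw [Ideal.span_singleton_le_iff_mem]
      exact hPk
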